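/- (Unit Fidelity, matrix form of Theorem 1.) Let n : ℕ and let l : List (Fin n → Fin 4) be a duplicate-free list containing every function a : Fin n → Fin 4 (so l enumerates all 4^n Pauli strings). Then for every complex matrix E indexed by (Fin n → Fin 2), l.foldl (fun M a => (P_a * M * P_a + M)/2) E = ((trace E)/2^n) • 1. That is, applying one layer of Pauli check sandwiching for every Pauli string reduces every Kraus operator to a scalar multiple of the identity. -/

import Mathlib

open Matrix Complex Kronecker

noncomputable def pauli : Fin 4 → Matrix (Fin 2) (Fin 2) ℂ
  | 0 => !![1, 0; 0, 1]
  | 1 => !![0, 1; 1, 0]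
  | 2 => !![0, -Complex.I; Complex.I, 0]
  | 3 => !![1, 0; 0, -1]

noncomputable def PauliString {n : ℕ} (a : Fin n → Fin 4) :
    Matrix (Fin n → Fin 2) (Fin n → Fin 2) ℂ :=
  Matrix.of fun f g => ∏ i, pauli (a i) (f i) (g i)

/-!
A check by an involution `u` replaces `m` by the average of `m` and `u * m * u`, which commutes with
`u` and has the same trace. If `u` commutes or anticommutes with `v`, the two signs picked up by
`v * m * v` cancel, so the check by `v` does not destroy commutation with `u`. After all the checks
the result therefore commutes with every Pauli string used. Once these generate the full matrix
algebra, the result is central, hence scalar, and the preserved trace determines the scalar.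
-/

section Involution

/-- The check map of the check `u`: the Kraus operator `m` after sandwiching by `u` and
postselection on ancilla outcome `0`. The operator comes first, so that layers of checks are left
folds. -/
def checkMap (K : Type*) {A : Type*} [Field K] [Ring A] [Algebra K A] (m u : A) : A :=
  ((1 : K) / 2) • (u * m * u + m)

/-- Elements that commute or anticommute. The sign is a unit of `ℤ`, so that signs can be multiplied
over tensor factors. -/
def CommuteUpToSign {A : Type*} [NonUnitalRing A] (u v : A) : Prop :=
  ∃ ε : ℤˣ, SemiconjBy u v (ε • v)

theorem CommuteUpToSign.commute_sandwich {A : Type*} [NonUnitalRing A] {u v m : A}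
    (huv : CommuteUpToSign u v) (hm : Commute u m) : Commute u (v * m * v) := by
  obtain ⟨ε, hε⟩ := huv
  have h := (hε.mul_right hm).mul_right hε
  rwa [smul_mul_assoc, smul_mul_smul_comm, Int.units_mul_self, one_smul] at h

variable {K A : Type*} [Field K] [Ring A] [Algebra K A]

theorem commute_checkMap_self {u : A} (hu : u * u = 1) (m : A) : Commute u (checkMap K m u) := by
  refine Commute.smul_right ?_ _
  calc u * (u * m * u + m) = u * u * m * u + u * m := by noncomm_ring
    _ = u * m * (u * u) + m * u := by rw [hu, one_mul, mul_one, add_comm]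
    _ = (u * m * u + m) * u := by noncomm_ring

theorem CommuteUpToSign.commute_checkMap {u v m : A} (huv : CommuteUpToSign u v)
    (hm : Commute u m) : Commute u (checkMap K m v) :=
  ((huv.commute_sandwich hm).add_right hm).smul_right _

theorem commute_foldl_checkMap {u : A} {l : List A} (hu : u * u = 1) (hul : u ∈ l)
    (hsign : ∀ v ∈ l, CommuteUpToSign u v) (m : A) : Commute u (l.foldl (checkMap K) m) := by
  obtain ⟨s, t, rfl⟩ := List.append_of_mem hul
  rw [List.foldl_append, List.foldl_cons]
  exact List.foldlRecOn t (checkMap K) (commute_checkMap_self hu _) fun _ hm v hv =>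
    (hsign v (by simp [hv])).commute_checkMap hm

end Involution

section Trace

variable {K κ : Type*} [Field K] [Fintype κ] [DecidableEq κ]

theorem trace_checkMap (h2 : (2 : K) ≠ 0) {u : Matrix κ κ K} (hu : u * u = 1)
    (m : Matrix κ κ K) : (checkMap K m u).trace = m.trace := by
  have hsandwich : (u * m * u).trace = m.trace := by
    rw [trace_mul_comm, ← mul_assoc, hu, one_mul]
  rw [checkMap, trace_smul, trace_add, hsandwich, smul_eq_mul]
  field_simp
  ring

theorem trace_foldl_checkMap (h2 : (2 : K) ≠ 0) {l : List (Matrix κ κ K)}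
    (hl : ∀ u ∈ l, u * u = 1) (m : Matrix κ κ K) : (l.foldl (checkMap K) m).trace = m.trace :=
  List.foldlRecOn (motive := fun m' => m'.trace = m.trace) l (checkMap K) rfl
    fun m' hm' u hu => (trace_checkMap h2 (hl u hu) m').trans hm'

theorem eq_trace_div_card_smul_one_of_mem_center (hκ : (Fintype.card κ : K) ≠ 0)
    {F : Matrix κ κ K} (hF : F ∈ Subalgebra.center K (Matrix κ κ K)) :
    F = (F.trace / Fintype.card κ) • 1 := by
  obtain ⟨c, rfl⟩ := Algebra.mem_bot.mp (Algebra.IsCentral.out hF)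
  rw [Algebra.algebraMap_eq_smul_one, trace_smul, trace_one, smul_eq_mul,
    mul_div_cancel_right₀ c hκ]

theorem foldl_checkMap_eq_smul_one_of_adjoin_eq_top (h2 : (2 : K) ≠ 0)
    (hκ : (Fintype.card κ : K) ≠ 0) {l : List (Matrix κ κ K)} (hl : ∀ u ∈ l, u * u = 1)
    (hsign : ∀ u ∈ l, ∀ v ∈ l, CommuteUpToSign u v)
    (hgen : Algebra.adjoin K {u | u ∈ l} = ⊤) (E : Matrix κ κ K) :
    l.foldl (checkMap K) E = (E.trace / Fintype.card κ) • 1 := by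
  have hcenter : l.foldl (checkMap K) E ∈ Subalgebra.center K (Matrix κ κ K) := by
    refine Subalgebra.mem_center_iff.mpr fun B => Eq.symm ?_
    exact Algebra.commute_of_mem_adjoin_of_forall_mem_commute (hgen ▸ Algebra.mem_top)
      fun u hu => (commute_foldl_checkMap (hl u hu) hu (hsign u hu) E).symm
  rw [eq_trace_div_card_smul_one_of_mem_center hκ hcenter, trace_foldl_checkMap h2 hl]

end Trace

section PiKronecker

variable {ι R : Type*} {κ : ι → Type*} [Fintype ι] [CommSemiring R]

/-- The Kronecker product of a finite family of square matrices, indexed by tuples of indices. -/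
def piKronecker (A : ∀ i, Matrix (κ i) (κ i) R) : Matrix (∀ i, κ i) (∀ i, κ i) R :=
  Matrix.of fun f g => ∏ i, A i (f i) (g i)

theorem piKronecker_smul {M : Type*} [CommMonoid M] [MulAction M R] [IsScalarTower M R R]
    [SMulCommClass M R R] (c : ι → M) (A : ∀ i, Matrix (κ i) (κ i) R) :
    piKronecker (fun i => c i • A i) = (∏ i, c i) • piKronecker A := by
  ext f g
  exact Finset.prod_smul Finset.univ c fun i => A i (f i) (g i)

theorem piKronecker_single [∀ i, DecidableEq (κ i)] (f g : ∀ i, κ i) :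
    piKronecker (fun i => single (f i) (g i) (1 : R)) = single f g 1 := by
  ext f' g'
  simp [piKronecker, single_apply, Fintype.prod_boole, funext_iff, forall_and]

theorem piKronecker_one [∀ i, DecidableEq (κ i)] :
    piKronecker (fun i => (1 : Matrix (κ i) (κ i) R)) = 1 := by
  ext f g
  simp [piKronecker, one_apply, Fintype.prod_boole, funext_iff]

theorem piKronecker_sum_smul [DecidableEq ι] {α : ι → Type*} [∀ i, Fintype (α i)]
    (c : ∀ i, α i → R) (b : ∀ i, α i → Matrix (κ i) (κ i) R) :
    piKronecker (fun i => ∑ x, c i x • b i x) =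
      ∑ a : ∀ i, α i, (∏ i, c i (a i)) • piKronecker fun i => b i (a i) := by
  ext f g
  simp [piKronecker, Matrix.sum_apply, Finset.prod_univ_sum, Finset.prod_mul_distrib]

theorem span_range_piKronecker_eq_top [∀ i, Finite (κ i)] {α : ι → Type*} [∀ i, Finite (α i)]
    {b : ∀ i, α i → Matrix (κ i) (κ i) R} (hb : ∀ i, Submodule.span R (Set.range (b i)) = ⊤) :
    Submodule.span R (Set.range fun a : ∀ i, α i => piKronecker fun i => b i (a i)) = ⊤ := by
  classical
  have (i : ι) : Fintype (κ i) := Fintype.ofFinite _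
  have (i : ι) : Fintype (α i) := Fintype.ofFinite _
  have hexpand (i : ι) (B : Matrix (κ i) (κ i) R) : ∃ c : α i → R, ∑ x, c x • b i x = B :=
    (Submodule.mem_span_range_iff_exists_fun R).mp (hb i ▸ Submodule.mem_top)
  refine eq_top_iff.mpr ((stdBasis R _ _).span_eq.ge.trans (Submodule.span_le.mpr ?_))
  rintro _ ⟨⟨f, g⟩, rfl⟩
  choose c hc using fun i => hexpand i (single (f i) (g i) 1)
  rw [stdBasis_eq_single, ← piKronecker_single, ← funext hc, piKronecker_sum_smul]
  exact Submodule.sum_smul_mem _ _ fun a _ => Submodule.subset_span ⟨a, rfl⟩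

variable [DecidableEq ι] [∀ i, Fintype (κ i)]

theorem piKronecker_mul (A B : ∀ i, Matrix (κ i) (κ i) R) :
    piKronecker A * piKronecker B = piKronecker fun i => A i * B i := by
  ext f g
  simp only [piKronecker, mul_apply, of_apply, Finset.prod_univ_sum, Fintype.piFinset_univ,
    Finset.prod_mul_distrib]

theorem CommuteUpToSign.piKronecker {S : Type*} [CommRing S]
    {A B : ∀ i, Matrix (κ i) (κ i) S} (h : ∀ i, CommuteUpToSign (A i) (B i)) :
    CommuteUpToSign (piKronecker A) (piKronecker B) := by
  choose ε hε using h
  refine ⟨∏ i, ε i, ?_⟩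
  rw [SemiconjBy, ← piKronecker_smul, piKronecker_mul, piKronecker_mul]
  exact congrArg _ (funext hε)

end PiKronecker

section Pauli

theorem pauli_mul_self (x : Fin 4) : pauli x * pauli x = 1 := by
  ext u v
  fin_cases x <;> fin_cases u <;> fin_cases v <;> simp [pauli, mul_apply]

theorem commute_pauli {x y : Fin 4} (h : x = 0 ∨ y = 0 ∨ x = y) :
    Commute (pauli x) (pauli y) := by
  have hzero : pauli 0 = 1 := one_fin_two.symm
  rcases h with rfl | rfl | rfl
  · exact hzero ▸ Commute.one_left _
  · exact hzero ▸ Commute.one_right _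
  · exact Commute.refl _

theorem semiconjBy_neg_pauli {x y : Fin 4} (hx : x ≠ 0) (hy : y ≠ 0) (hxy : x ≠ y) :
    SemiconjBy (pauli x) (pauli y) (-pauli y) := by
  ext u v
  fin_cases x <;> fin_cases y <;> try contradiction
  all_goals fin_cases u <;> fin_cases v <;> simp [pauli, mul_apply]

theorem commuteUpToSign_pauli (x y : Fin 4) : CommuteUpToSign (pauli x) (pauli y) := by
  by_cases h : x = 0 ∨ y = 0 ∨ x = y
  · exact ⟨1, (one_smul ℤˣ (pauli y)).symm ▸ commute_pauli h⟩
  · push Not at h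
    exact ⟨-1, by simpa only [Units.neg_smul, one_smul] using semiconjBy_neg_pauli h.1 h.2.1 h.2.2⟩

theorem sum_trace_pauli_mul_smul_pauli (M : Matrix (Fin 2) (Fin 2) ℂ) :
    ∑ x, ((pauli x * M).trace / 2) • pauli x = M := by
  ext u v
  fin_cases u <;> fin_cases v <;>
    simp only [pauli, Fin.sum_univ_four, trace_fin_two, mul_apply, Fin.sum_univ_two,
      Matrix.add_apply, Matrix.smul_apply, smul_eq_mul, of_apply, cons_val', cons_val_zero,
      cons_val_one, cons_val_fin_one, Fin.zero_eta, Fin.mk_one] <;>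
    grind [I_mul_I]

theorem span_range_pauli_eq_top : Submodule.span ℂ (Set.range pauli) = ⊤ :=
  eq_top_iff.mpr fun M _ => (Submodule.mem_span_range_iff_exists_fun ℂ).mpr
    ⟨_, sum_trace_pauli_mul_smul_pauli M⟩

variable {n : ℕ}

theorem pauliString_eq_piKronecker (a : Fin n → Fin 4) :
    PauliString a = piKronecker fun i => pauli (a i) :=
  rfl

theorem pauliString_mul_self (a : Fin n → Fin 4) : PauliString a * PauliString a = 1 := by
  simp only [pauliString_eq_piKronecker, piKronecker_mul, pauli_mul_self, piKronecker_one]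

theorem commuteUpToSign_pauliString (a b : Fin n → Fin 4) :
    CommuteUpToSign (PauliString a) (PauliString b) :=
  .piKronecker fun i => commuteUpToSign_pauli (a i) (b i)

theorem span_range_pauliString_eq_top :
    Submodule.span ℂ (Set.range (PauliString (n := n))) = ⊤ :=
  span_range_piKronecker_eq_top fun _ => span_range_pauli_eq_top

theorem adjoin_range_pauliString_eq_top :
    Algebra.adjoin ℂ (Set.range (PauliString (n := n))) = ⊤ :=
  Algebra.toSubmodule_eq_top.mp <|
    top_le_iff.mp (span_range_pauliString_eq_top.ge.trans (Algebra.span_le_adjoin ℂ _))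

theorem all_checks_reduce_to_identity_general {l : List (Fin n → Fin 4)}
    (hgen : Algebra.adjoin ℂ (PauliString '' {a | a ∈ l}) = ⊤)
    (E : Matrix (Fin n → Fin 2) (Fin n → Fin 2) ℂ) :
    l.foldl (fun M a => ((1 : ℂ) / 2) • (PauliString a * M * PauliString a + M)) E =
      (E.trace / (2 : ℂ) ^ n) • 1 := by
  have hcard : (Fintype.card (Fin n → Fin 2) : ℂ) = 2 ^ n := by simp
  have hset : {u | u ∈ l.map PauliString} = PauliString '' {a | a ∈ l} := by ext; simp
  have h := foldl_checkMap_eq_smul_one_of_adjoin_eq_top two_ne_zero (by simp)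
    (l := l.map PauliString) (List.forall_mem_map.mpr fun a _ => pauliString_mul_self a)
    (List.forall_mem_map.mpr fun a _ => List.forall_mem_map.mpr fun b _ =>
      commuteUpToSign_pauliString a b)
    (hset ▸ hgen) E
  rwa [List.foldl_map, hcard] at h

end Pauli

theorem all_checks_reduce_to_identity (n : ℕ) (l : List (Fin n → Fin 4))
    (hnd : l.Nodup) (hmem : ∀ a : Fin n → Fin 4, a ∈ l)
    (E : Matrix (Fin n → Fin 2) (Fin n → Fin 2) ℂ) :
    l.foldl (fun M a => ((1 : ℂ) / 2) • (PauliString a * M * PauliString a + M)) E =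
      (Matrix.trace E / (2 : ℂ) ^ n) • (1 : Matrix (Fin n → Fin 2) (Fin n → Fin 2) ℂ) := by
  have hl : {a | a ∈ l} = Set.univ := Set.eq_univ_of_forall hmem
  exact all_checks_reduce_to_identity_general
    (by rw [hl, Set.image_univ, adjoin_range_pauliString_eq_top]) E
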